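/- arXiv:2604.21697 — 2 statements merged into one kernel-verified Lean document; each statement's English description precedes it below -/
import Mathlib

section
/- Let φ, θ be smooth fields on (0,T) × ℝ^d with θ > 0 everywhere (no PDE is assumed), and let F denote the Helmholtz free energy along the fields, F := θG(∇φ) + f(φ,θ). Then for each j = 1,…,d the pointwise identity (div σ̃)ⱼ = (∇G(∇φ)·∇θ)(∂ⱼφ) + s ∂ⱼθ − μ ∂ⱼφ + ∂ⱼF holds; in vector form, div(σ̃) = (σᵀ + sI)∇θ − μ∇φ + ∇F, where σ := σ̃/θ (Korteweg stress divergence identity). -/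
/-!
The identity is the product rule and the chain rule at a fixed time. Write `c = ∇G(∇φ)`.
The product rule gives `∂ᵢ(θ cᵢ ∂ⱼφ) = cᵢ ∂ᵢθ ∂ⱼφ + θ ∂ᵢcᵢ ∂ⱼφ + θ cᵢ ∂ᵢ∂ⱼφ`. Summed over `i`, the
first term is `(c · ∇θ) ∂ⱼφ`, the second is the gradient part of `-μ ∂ⱼφ`, and the third equals
`θ ∂ⱼ(G(∇φ))` by the chain rule (`pd_comp_grad`) and the symmetry of second derivatives
(`pd_pd_comm`). The remaining terms of `∂ⱼF` are `G(∇φ) ∂ⱼθ + ∂_φf ∂ⱼφ + ∂_θf ∂ⱼθ` (`pd_comp_two`),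
and these cancel against `s ∂ⱼθ` and the potential part of `-μ ∂ⱼφ`.
-/

open MeasureTheory

noncomputable section

/-- `i`-th spatial partial derivative of a scalar field. -/
def pd {d : ℕ} (i : Fin d) (g : (Fin d → ℝ) → ℝ) (x : Fin d → ℝ) : ℝ :=
  fderiv ℝ g x (Pi.single i 1)

/-- Spatial gradient of a scalar field. -/
def grad {d : ℕ} (g : (Fin d → ℝ) → ℝ) (x : Fin d → ℝ) : Fin d → ℝ :=
  fun i => pd i g x

/-- Divergence of a vector field. -/
def divg {d : ℕ} (u : (Fin d → ℝ) → Fin d → ℝ) (x : Fin d → ℝ) : ℝ :=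
  ∑ i, pd i (fun y => u y i) x

/-- Euclidean dot product. -/
def dot {d : ℕ} (a b : Fin d → ℝ) : ℝ := ∑ i, a i * b i

/-- Time derivative of a time-dependent scalar field. -/
def dt {d : ℕ} (g : ℝ → (Fin d → ℝ) → ℝ) (t : ℝ) (x : Fin d → ℝ) : ℝ :=
  deriv (fun s => g s x) t

/-- The box `Ω = [0, L₁] × ⋯ × [0, L_d]`. -/
def box {d : ℕ} (L : Fin d → ℝ) : Set (Fin d → ℝ) :=
  Set.univ.pi fun i => Set.Icc 0 (L i)

/-- Spatial periodicity with periods `L`. -/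
def SpacePeriodic {d : ℕ} (L : Fin d → ℝ) (g : (Fin d → ℝ) → ℝ) : Prop :=
  ∀ x i, g (x + Pi.single i (L i)) = g x

/-- Entropy density `s = -G(∇φ) - ∂_θ f(φ, θ)`. -/
def entS {d : ℕ} (G : (Fin d → ℝ) → ℝ) (f : ℝ → ℝ → ℝ)
    (φ θ : ℝ → (Fin d → ℝ) → ℝ) (t : ℝ) (x : Fin d → ℝ) : ℝ :=
  -G (grad (φ t) x) - deriv (f (φ t x)) (θ t x)

/-- Internal energy density `e = f(φ, θ) - θ ∂_θ f(φ, θ)`. -/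
def intE {d : ℕ} (f : ℝ → ℝ → ℝ) (φ θ : ℝ → (Fin d → ℝ) → ℝ)
    (t : ℝ) (x : Fin d → ℝ) : ℝ :=
  f (φ t x) (θ t x) - θ t x * deriv (f (φ t x)) (θ t x)

/-- Total energy density `e_tot = e + |u|²/2`. -/
def totE {d : ℕ} (f : ℝ → ℝ → ℝ) (φ θ : ℝ → (Fin d → ℝ) → ℝ)
    (u : ℝ → (Fin d → ℝ) → Fin d → ℝ) (t : ℝ) (x : Fin d → ℝ) : ℝ :=
  intE f φ θ t x + (1 / 2) * ∑ i, (u t x i) ^ 2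

/-- Chemical potential `μ = -θ div(∇G(∇φ)) + ∂_φ f(φ, θ)`. -/
def chemMu {d : ℕ} (G : (Fin d → ℝ) → ℝ) (f : ℝ → ℝ → ℝ)
    (φ θ : ℝ → (Fin d → ℝ) → ℝ) (t : ℝ) (x : Fin d → ℝ) : ℝ :=
  -θ t x * divg (fun y => grad G (grad (φ t) y)) x
    + deriv (fun a => f a (θ t x)) (φ t x)

/-- Korteweg stress `σ̃ᵢⱼ = θ (∇G(∇φ))ᵢ ∂ⱼφ`. -/
def korteweg {d : ℕ} (G : (Fin d → ℝ) → ℝ)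
    (φ θ : ℝ → (Fin d → ℝ) → ℝ) (t : ℝ) (x : Fin d → ℝ) (i j : Fin d) : ℝ :=
  θ t x * grad G (grad (φ t) x) i * pd j (φ t) x

/-- Symmetric gradient `Dw = (∇w + (∇w)ᵀ)/2` of a (spatial) vector field. -/
def symGrad {d : ℕ} (w : (Fin d → ℝ) → Fin d → ℝ) (x : Fin d → ℝ) (i j : Fin d) : ℝ :=
  (pd i (fun y => w y j) x + pd j (fun y => w y i) x) / 2

theorem pd_add {d : ℕ} (i : Fin d) {g h : (Fin d → ℝ) → ℝ} {x : Fin d → ℝ}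
    (hg : DifferentiableAt ℝ g x) (hh : DifferentiableAt ℝ h x) :
    pd i (fun y => g y + h y) x = pd i g x + pd i h x := by
  simp only [pd]
  rw [fderiv_fun_add hg hh]
  rfl

theorem pd_mul {d : ℕ} (i : Fin d) {g h : (Fin d → ℝ) → ℝ} {x : Fin d → ℝ}
    (hg : DifferentiableAt ℝ g x) (hh : DifferentiableAt ℝ h x) :
    pd i (fun y => g y * h y) x = pd i g x * h x + g x * pd i h x := by
  simp only [pd]
  rw [fderiv_fun_mul hg hh]
  simp only [add_apply, smul_apply, smul_eq_mul]
  ring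

theorem contDiff_pd {d : ℕ} (i : Fin d) {g : (Fin d → ℝ) → ℝ} (hg : ContDiff ℝ 2 g) :
    ContDiff ℝ 1 (pd i g) :=
  (hg.fderiv_right (m := 1) (by norm_num)).clm_apply contDiff_const

theorem contDiff_grad {d : ℕ} {g : (Fin d → ℝ) → ℝ} (hg : ContDiff ℝ 2 g) :
    ContDiff ℝ 1 (grad g) :=
  contDiff_pi.2 fun i => contDiff_pd i hg

theorem pd_pd_comm {d : ℕ} (i j : Fin d) {g : (Fin d → ℝ) → ℝ} (hg : ContDiff ℝ 2 g)
    (x : Fin d → ℝ) : pd i (pd j g) x = pd j (pd i g) x := by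
  have hd : DifferentiableAt ℝ (fderiv ℝ g) x :=
    (hg.fderiv_right (m := 1) (by norm_num)).differentiable (by norm_num) x
  have key : ∀ a b : Fin d, pd a (pd b g) x
      = fderiv ℝ (fderiv ℝ g) x (Pi.single a 1) (Pi.single b 1) := by
    intro a b
    change fderiv ℝ (fun y => fderiv ℝ g y (Pi.single b 1)) x (Pi.single a 1) = _
    rw [fderiv_clm_apply hd (differentiableAt_const _)]
    simp
  rw [key, key]
  exact (hg.contDiffAt.isSymmSndFDerivAt (by simp)).eq _ _

theorem fderiv_eq_sum_grad {d : ℕ} (G : (Fin d → ℝ) → ℝ) (z v : Fin d → ℝ) :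
    fderiv ℝ G z v = ∑ i, grad G z i * v i := by
  conv_lhs => rw [pi_eq_sum_univ' v]
  simp only [map_sum, map_smul, smul_eq_mul, grad, pd]
  exact Finset.sum_congr rfl fun i _ => mul_comm _ _

/-- Chain rule for `G(∇p)`. -/
theorem pd_comp_grad {d : ℕ} (j : Fin d) {G p : (Fin d → ℝ) → ℝ} (hG : ContDiff ℝ 2 G)
    (hp : ContDiff ℝ 2 p) (x : Fin d → ℝ) :
    pd j (fun y => G (grad p y)) x = ∑ i, grad G (grad p x) i * pd j (pd i p) x := by
  have hgp : DifferentiableAt ℝ (grad p) x := (contDiff_grad hp).differentiable (by norm_num) x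
  have h := (hG.differentiable (by norm_num) (grad p x)).hasFDerivAt.comp x hgp.hasFDerivAt
  have hcoord : ∀ i, fderiv ℝ (grad p) x (Pi.single j 1) i = pd j (pd i p) x := by
    intro i
    have hi := (hasFDerivAt_pi'.1 hgp.hasFDerivAt i).fderiv
    change _ = fderiv ℝ (fun y => grad p y i) x (Pi.single j 1)
    rw [hi]
    rfl
  change fderiv ℝ (G ∘ grad p) x (Pi.single j 1) = _
  rw [h.fderiv, ContinuousLinearMap.comp_apply, fderiv_eq_sum_grad]
  simp only [hcoord]

/-- Chain rule for `f(p, q)`, with the derivative of `f` split into its two partial derivatives. -/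
theorem pd_comp_two {d : ℕ} (j : Fin d) {f : ℝ → ℝ → ℝ} {p q : (Fin d → ℝ) → ℝ}
    {x : Fin d → ℝ} (hf : DifferentiableAt ℝ (fun r : ℝ × ℝ => f r.1 r.2) (p x, q x))
    (hp : DifferentiableAt ℝ p x) (hq : DifferentiableAt ℝ q x) :
    pd j (fun y => f (p y) (q y)) x
      = deriv (fun a => f a (q x)) (p x) * pd j p x + deriv (f (p x)) (q x) * pd j q x := by
  set L := fderiv ℝ (fun r : ℝ × ℝ => f r.1 r.2) (p x, q x) with hL
  have h1 : HasDerivAt (fun a => f a (q x)) (L (1, 0)) (p x) :=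
    HasFDerivAt.comp_hasDerivAt (p x) (f := fun a : ℝ => (a, q x)) hf.hasFDerivAt
      ((hasDerivAt_id (p x)).prodMk (hasDerivAt_const (p x) (q x)))
  have h2 : HasDerivAt (f (p x)) (L (0, 1)) (q x) :=
    HasFDerivAt.comp_hasDerivAt (q x) (f := fun b : ℝ => (p x, b)) hf.hasFDerivAt
      ((hasDerivAt_const (q x) (p x)).prodMk (hasDerivAt_id (q x)))
  have h3 : HasFDerivAt (fun y => f (p y) (q y)) (L.comp ((fderiv ℝ p x).prod (fderiv ℝ q x))) x :=
    HasFDerivAt.comp x (f := fun y => (p y, q y)) hf.hasFDerivAt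
      (hp.hasFDerivAt.prodMk hq.hasFDerivAt)
  rw [h1.deriv, h2.deriv]
  simp only [pd]
  rw [h3.fderiv]
  simp only [ContinuousLinearMap.comp_apply, ContinuousLinearMap.prod_apply]
  generalize fderiv ℝ p x (Pi.single j 1) = a
  generalize fderiv ℝ q x (Pi.single j 1) = b
  have hab : ((a, b) : ℝ × ℝ) = a • (1, 0) + b • (0, 1) := by simp
  rw [hab, map_add, map_smul, map_smul, smul_eq_mul, smul_eq_mul]
  ring

/-- Korteweg stress divergence identity (no PDE assumed). -/
theorem korteweg_divergence_identity
    {d : ℕ} (hd : d = 1 ∨ d = 2 ∨ d = 3)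
    (T : ℝ) (hT : 0 < T)
    (G : (Fin d → ℝ) → ℝ) (hG : ContDiff ℝ 2 G)
    (f : ℝ → ℝ → ℝ)
    (hf : ContDiffOn ℝ 2 (fun q : ℝ × ℝ => f q.1 q.2) (Set.univ ×ˢ Set.Ioi 0))
    (φ θ : ℝ → (Fin d → ℝ) → ℝ)
    (hφ : ContDiff ℝ (⊤ : ℕ∞) fun q : ℝ × (Fin d → ℝ) => φ q.1 q.2)
    (hθsm : ContDiff ℝ (⊤ : ℕ∞) fun q : ℝ × (Fin d → ℝ) => θ q.1 q.2)
    (hθpos : ∀ t x, 0 < θ t x)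
    :
    ∀ t ∈ Set.Ioo (0 : ℝ) T, ∀ x, ∀ j,
      (∑ i, pd i (fun y => korteweg G φ θ t y i j) x)
        = dot (grad G (grad (φ t) x)) (grad (θ t) x) * pd j (φ t) x
          + entS G f φ θ t x * pd j (θ t) x
          - chemMu G f φ θ t x * pd j (φ t) x
          + pd j (fun y => θ t y * G (grad (φ t) y) + f (φ t y) (θ t y)) x := by
  intro t _ x j
  have slice : ContDiff ℝ (⊤ : ℕ∞) (fun y : Fin d → ℝ => (t, y)) := contDiff_const.prodMk contDiff_id
  have hp : ContDiff ℝ 2 (φ t) := contDiff_infty.1 (hφ.comp slice) 2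
  have hq : ContDiff ℝ 2 (θ t) := contDiff_infty.1 (hθsm.comp slice) 2
  have dp : DifferentiableAt ℝ (φ t) x := hp.differentiable (by norm_num) x
  have dq : DifferentiableAt ℝ (θ t) x := hq.differentiable (by norm_num) x
  -- The half-plane `θ > 0` is open, so regularity on it gives differentiability at the point.
  have df : DifferentiableAt ℝ (fun r : ℝ × ℝ => f r.1 r.2) (φ t x, θ t x) :=
    (hf.contDiffAt ((isOpen_univ.prod isOpen_Ioi).mem_nhds
      (Set.mk_mem_prod (Set.mem_univ _) (Set.mem_Ioi.2 (hθpos t x))))).differentiableAt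
      (by norm_num)
  have dgp : DifferentiableAt ℝ (grad (φ t)) x := (contDiff_grad hp).differentiable (by norm_num) x
  have dc : ∀ i, DifferentiableAt ℝ (fun y => grad G (grad (φ t) y) i) x := fun i =>
    ((contDiff_pd i hG).comp (contDiff_grad hp)).differentiable (by norm_num) x
  have dpj : DifferentiableAt ℝ (pd j (φ t)) x :=
    (contDiff_pd j hp).differentiable (by norm_num) x
  have dGp : DifferentiableAt ℝ (fun y => G (grad (φ t) y)) x :=
    (hG.differentiable (by norm_num) _).comp x dgp
  have dfpq : DifferentiableAt ℝ (fun y => f (φ t y) (θ t y)) x :=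
    DifferentiableAt.comp x (f := fun y => (φ t y, θ t y)) df (dp.prodMk dq)
  have hF : pd j (fun y => θ t y * G (grad (φ t) y) + f (φ t y) (θ t y)) x
      = pd j (θ t) x * G (grad (φ t) x)
        + θ t x * ∑ i, grad G (grad (φ t) x) i * pd j (pd i (φ t)) x
        + (deriv (fun a => f a (θ t x)) (φ t x) * pd j (φ t) x
          + deriv (f (φ t x)) (θ t x) * pd j (θ t) x) := by
    rw [pd_add j (dq.fun_mul dGp) dfpq, pd_mul j dq dGp, pd_comp_grad j hG hp x,
      pd_comp_two j df dp dq]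
  have hσ : ∀ i, pd i (fun y => korteweg G φ θ t y i j) x
      = grad G (grad (φ t) x) i * grad (θ t) x i * pd j (φ t) x
        + θ t x * pd i (fun y => grad G (grad (φ t) y) i) x * pd j (φ t) x
        + θ t x * (grad G (grad (φ t) x) i * pd j (pd i (φ t)) x) := by
    intro i
    simp only [korteweg]
    rw [pd_mul i (dq.fun_mul (dc i)) dpj, pd_mul i dq (dc i), pd_pd_comm i j hp x]
    simp only [grad]
    ring
  rw [hF, Finset.sum_congr rfl fun i _ => hσ i, Finset.sum_add_distrib, Finset.sum_add_distrib,
    ← Finset.sum_mul, ← Finset.sum_mul, ← Finset.mul_sum, ← Finset.mul_sum]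
  simp only [dot, entS, chemMu, divg]
  ring
end
end

section
/- Let (φ, μ, θ, u, p) be smooth spatially periodic fields on (0,T) × ℝ^d with θ > 0 everywhere satisfying the variational formulation (V1)–(V5). Then for every t ∈ (0,T), (d/dt) ∫_Ω e_tot dx = ∫_Ω Q dx + ∫_Ω b·u dx; this conclusion is obtained using only the test functions ψ = μ, ξ = ∂_tφ, ω = θ, v = u and a suitable mean-free multiple of p in (V1)–(V5). -/
/-!
The chain rule and the definition of the entropy density `s` give, pointwise,
`∂ₜe = ∂_φf ∂ₜφ + θ ∂ₜs + θ ∇G(∇φ)·∇∂ₜφ` (`dt_intE`), where `∇∂ₜφ = ∂ₜ∇φ` by Schwarz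
(`dt_pd_comm`). Differentiating under the integral over the compact box (`deriv_integral_box`),
`d/dt ∫ e_tot` is the integral of this expression plus `∂ₜu·u`.

The chemical potential equation tested with `ξ = ∂ₜφ` replaces `∫ (∂_φf ∂ₜφ + θ ∇G·∇∂ₜφ)` by
`∫ (μ ∂ₜφ - (∇G·∇θ) ∂ₜφ)`. The entropy equation tested with `ω = θ` expresses `∫ θ ∂ₜs`, and its
heat conduction term vanishes pointwise. The momentum equation tested with `v = u` expresses
`∫ ∂ₜu·u`, and its skew-symmetric convection term vanishes. Adding the phase equation tested with
`ψ = μ`, the mobility dissipation cancels against `∫ μ (∂ₜφ + u·∇φ)`; the viscous terms and all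
the capillary and entropy couplings cancel as well, so that only the sources and the pressure
work `∫ p div u` are left.

The pressure work is zero: the incompressibility constraint can be tested with `p` minus its mean,
and the mean contributes a multiple of `∫ div u`, which vanishes by the divergence theorem and
periodicity (`integral_divg_eq_zero`).

The functions `f` and `G` are only `C²`, and `f` only on `θ > 0`, so the first derivatives of `f`
along the fields, and hence `e` and `s`, are jointly `C¹` in time and space. This is exactly what
is needed to differentiate in time and to split the integrals of the continuous integrands.
-/

open MeasureTheory

noncomputable section

/-! ### Calculus of time-dependent fields -/

section helpers

variable {d : ℕ}

lemma two_le_smooth : (2 : WithTop ℕ∞) ≤ ((⊤ : ℕ∞) : WithTop ℕ∞) :=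
  WithTop.coe_le_coe.2 (le_top : (2 : ℕ∞) ≤ ⊤)

lemma one_add_one_le_smooth : (1 : WithTop ℕ∞) + 1 ≤ ((⊤ : ℕ∞) : WithTop ℕ∞) := by
  rw [one_add_one_eq_two]; exact two_le_smooth

lemma hasDerivAt_slice {g : ℝ → (Fin d → ℝ) → ℝ}
    (hg : Differentiable ℝ fun q : ℝ × (Fin d → ℝ) => g q.1 q.2) (t : ℝ) (x : Fin d → ℝ) :
    HasDerivAt (fun s => g s x) (fderiv ℝ (fun q : ℝ × (Fin d → ℝ) => g q.1 q.2) (t, x) (1, 0)) t :=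
  (hg (t, x)).hasFDerivAt.comp_hasDerivAt (f := fun s => (s, x)) t
    ((hasDerivAt_id t).prodMk (hasDerivAt_const t x))

lemma dt_eq {g : ℝ → (Fin d → ℝ) → ℝ}
    (hg : Differentiable ℝ fun q : ℝ × (Fin d → ℝ) => g q.1 q.2) (t : ℝ) (x : Fin d → ℝ) :
    dt g t x = fderiv ℝ (fun q : ℝ × (Fin d → ℝ) => g q.1 q.2) (t, x) (1, 0) :=
  (hasDerivAt_slice hg t x).deriv

lemma hasDerivAt_dt {g : ℝ → (Fin d → ℝ) → ℝ}
    (hg : Differentiable ℝ fun q : ℝ × (Fin d → ℝ) => g q.1 q.2) (t : ℝ) (x : Fin d → ℝ) :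
    HasDerivAt (fun s => g s x) (dt g t x) t := by
  rw [dt_eq hg]; exact hasDerivAt_slice hg t x

lemma pd_eq {g : ℝ → (Fin d → ℝ) → ℝ}
    (hg : Differentiable ℝ fun q : ℝ × (Fin d → ℝ) => g q.1 q.2) (i : Fin d)
    (t : ℝ) (x : Fin d → ℝ) :
    pd i (g t) x
      = fderiv ℝ (fun q : ℝ × (Fin d → ℝ) => g q.1 q.2) (t, x) (0, Pi.single i 1) := by
  have h := (hg (t, x)).hasFDerivAt.comp x ((hasFDerivAt_const t x).prodMk (hasFDerivAt_id x))
  have h' : HasFDerivAt (g t) _ x := h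
  rw [pd, h'.fderiv]
  simp

lemma contDiff_dt {g : ℝ → (Fin d → ℝ) → ℝ} {m n : WithTop ℕ∞}
    (hg : ContDiff ℝ n fun q : ℝ × (Fin d → ℝ) => g q.1 q.2) (hmn : m + 1 ≤ n) :
    ContDiff ℝ m fun q : ℝ × (Fin d → ℝ) => dt g q.1 q.2 := by
  have hd := hg.differentiable (by rintro rfl; simp at hmn)
  simp only [dt_eq hd]
  exact (hg.fderiv_right hmn).clm_apply contDiff_const

lemma contDiff_pd_s12 {g : ℝ → (Fin d → ℝ) → ℝ} {m n : WithTop ℕ∞}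
    (hg : ContDiff ℝ n fun q : ℝ × (Fin d → ℝ) => g q.1 q.2) (hmn : m + 1 ≤ n) (i : Fin d) :
    ContDiff ℝ m fun q : ℝ × (Fin d → ℝ) => pd i (g q.1) q.2 := by
  have hd := hg.differentiable (by rintro rfl; simp at hmn)
  simp only [pd_eq hd]
  exact (hg.fderiv_right hmn).clm_apply contDiff_const

/-- Time and space derivatives commute (Schwarz). -/
lemma dt_pd_comm {g : ℝ → (Fin d → ℝ) → ℝ}
    (hg : ContDiff ℝ (⊤ : ℕ∞) fun q : ℝ × (Fin d → ℝ) => g q.1 q.2) (i : Fin d)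
    (t : ℝ) (x : Fin d → ℝ) :
    dt (fun s y => pd i (g s) y) t x = pd i (dt g t) x := by
  have hd := hg.differentiable (by simp)
  have h2 : ContDiff ℝ 1 (fderiv ℝ fun q : ℝ × (Fin d → ℝ) => g q.1 q.2) :=
    hg.fderiv_right one_add_one_le_smooth
  have h2d : DifferentiableAt ℝ (fderiv ℝ fun q : ℝ × (Fin d → ℝ) => g q.1 q.2) (t, x) :=
    h2.differentiable (by simp) _
  rw [dt_eq ((contDiff_pd_s12 (m := 1) hg one_add_one_le_smooth i).differentiable (by simp)),
    pd_eq ((contDiff_dt (m := 1) hg one_add_one_le_smooth).differentiable (by simp))]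
  simp only [dt_eq hd, pd_eq hd, Prod.mk.eta]
  rw [fderiv_clm_apply h2d (differentiableAt_const _),
    fderiv_clm_apply h2d (differentiableAt_const _)]
  have hs : IsSymmSndFDerivAt ℝ (fun q : ℝ × (Fin d → ℝ) => g q.1 q.2) (t, x) :=
    (hg.of_le two_le_smooth).contDiffAt.isSymmSndFDerivAt
      (by simp)
  simpa using hs (1, 0) (0, Pi.single i 1)

lemma continuous_slice {g : ℝ → (Fin d → ℝ) → ℝ} {n : WithTop ℕ∞}
    (hg : ContDiff ℝ n fun q : ℝ × (Fin d → ℝ) => g q.1 q.2) (t : ℝ) : Continuous (g t) :=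
  hg.continuous.comp (by fun_prop : Continuous fun x : Fin d → ℝ => (t, x))

lemma contDiff_slice {E : Type*} [NormedAddCommGroup E] [NormedSpace ℝ E]
    {g : ℝ → (Fin d → ℝ) → E} {n : WithTop ℕ∞}
    (hg : ContDiff ℝ n fun q : ℝ × (Fin d → ℝ) => g q.1 q.2) (t : ℝ) : ContDiff ℝ n (g t) :=
  hg.comp (by fun_prop : ContDiff ℝ n fun x : Fin d → ℝ => (t, x))

lemma continuous_pd_slice {g : ℝ → (Fin d → ℝ) → ℝ}
    (hg : ContDiff ℝ (⊤ : ℕ∞) fun q : ℝ × (Fin d → ℝ) => g q.1 q.2) (t : ℝ) (i : Fin d) :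
    Continuous fun x => pd i (g t) x :=
  continuous_slice (g := fun t x => pd i (g t) x)
    (contDiff_pd_s12 (m := 1) hg one_add_one_le_smooth i) t

lemma continuous_dt_slice {g : ℝ → (Fin d → ℝ) → ℝ}
    (hg : ContDiff ℝ 1 fun q : ℝ × (Fin d → ℝ) => g q.1 q.2) (t : ℝ) :
    Continuous fun x => dt g t x :=
  continuous_slice (g := fun t x => dt g t x) (contDiff_dt (m := 0) hg (by simp)) t

lemma dt_periodic {L : Fin d → ℝ} {g : ℝ → (Fin d → ℝ) → ℝ}
    (hg : ∀ t, SpacePeriodic L (g t)) (t : ℝ) : SpacePeriodic L (dt g t) := by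
  intro x i
  simp only [dt, hg _ x i]

/-! ### Integration over the periodic box -/

lemma box_eq_Icc (L : Fin d → ℝ) : box L = Set.Icc 0 L := by
  rw [box, ← Set.pi_univ_Icc]; rfl

lemma integrableOn_box {L : Fin d → ℝ} {g : (Fin d → ℝ) → ℝ} (hg : Continuous g) :
    Integrable g (volume.restrict (box L)) := by
  rw [box_eq_Icc]; exact hg.integrableOn_Icc

/-- Differentiation under the integral sign over the (compact) box. -/
lemma deriv_integral_box {L : Fin d → ℝ} {g : ℝ → (Fin d → ℝ) → ℝ}
    (hg : ContDiff ℝ 1 fun q : ℝ × (Fin d → ℝ) => g q.1 q.2) (t : ℝ) :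
    deriv (fun s => ∫ x in box L, g s x) t = ∫ x in box L, dt g t x := by
  have hd := hg.differentiable (by simp)
  have hc : Continuous fun q : ℝ × (Fin d → ℝ) => dt g q.1 q.2 :=
    (contDiff_dt (m := 0) hg (by simp)).continuous
  obtain ⟨C, hC⟩ := ((isCompact_closedBall t 1).prod (isCompact_Icc (a := (0 : Fin d → ℝ))
    (b := L))).exists_bound_of_continuousOn hc.continuousOn
  refine (hasDerivAt_integral_of_dominated_loc_of_deriv_le (F := g) (F' := dt g)
    (bound := fun _ => C) (Metric.closedBall_mem_nhds t one_pos)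
    (.of_forall fun s => (continuous_slice hg s).aestronglyMeasurable)
    (integrableOn_box (continuous_slice hg t))
    (continuous_dt_slice hg t).aestronglyMeasurable ?_ (integrableOn_box continuous_const)
    (.of_forall fun x s _ => hasDerivAt_dt hd s x)).2.deriv
  rw [box_eq_Icc]
  filter_upwards [ae_restrict_mem measurableSet_Icc] with x hx s hs
  exact hC (s, x) ⟨hs, hx⟩

/-- The fluxes of a periodic field through opposite faces of the box cancel. -/
lemma integral_divg_eq_zero {L : Fin d → ℝ} (hL : ∀ i, 0 < L i) {w : (Fin d → ℝ) → Fin d → ℝ}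
    (hw : ContDiff ℝ 1 w) (hper : ∀ j, SpacePeriodic L fun x => w x j) :
    ∫ x in box L, divg w x = 0 := by
  have hwj : ∀ j, ContDiff ℝ 1 fun x => w x j := fun j => contDiff_pi.1 hw j
  cases d with
  | zero => simp [divg]
  | succ n =>
    have h := integral_divergence_of_hasFDerivAt_off_countable' (0 : Fin (n + 1) → ℝ) L
      (fun i => (hL i).le) (fun j x => w x j) (fun j x => fderiv ℝ (fun y => w y j) x) ∅
      Set.countable_empty (fun j => (hwj j).continuous.continuousOn)
      (fun x _ j => ((hwj j).differentiable (by simp) x).hasFDerivAt)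
      (Continuous.integrableOn_Icc (continuous_finsetSum _ fun j _ =>
        ((hwj j).continuous_fderiv (by simp)).clm_apply continuous_const))
    rw [box_eq_Icc]
    refine h.trans (Finset.sum_eq_zero fun i _ => sub_eq_zero.2 ?_)
    congr 1
    ext x
    have : (i.insertNth (L i) x : Fin (n + 1) → ℝ)
        = i.insertNth ((0 : Fin (n + 1) → ℝ) i) x + Pi.single i (L i) := by
      ext k
      refine Fin.succAboveCases i ?_ (fun k => ?_) k <;> simp
    simp only [this, hper i _ i]

/-! ### The constitutive functions -/

lemma hasFDerivAt_f {f : ℝ → ℝ → ℝ}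
    (hf : ContDiffOn ℝ 2 (fun q : ℝ × ℝ => f q.1 q.2) (Set.univ ×ˢ Set.Ioi 0)) {a c : ℝ}
    (hc : 0 < c) : HasFDerivAt (fun q : ℝ × ℝ => f q.1 q.2)
      (fderiv ℝ (fun q : ℝ × ℝ => f q.1 q.2) (a, c)) (a, c) :=
  ((hf.contDiffAt ((isOpen_univ.prod isOpen_Ioi).mem_nhds
    (show (a, c) ∈ Set.univ ×ˢ Set.Ioi (0 : ℝ) from ⟨trivial, hc⟩))).differentiableAt
    (by simp)).hasFDerivAt

lemma deriv_f_fst {f : ℝ → ℝ → ℝ}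
    (hf : ContDiffOn ℝ 2 (fun q : ℝ × ℝ => f q.1 q.2) (Set.univ ×ˢ Set.Ioi 0)) {a c : ℝ}
    (hc : 0 < c) :
    deriv (fun a => f a c) a = fderiv ℝ (fun q : ℝ × ℝ => f q.1 q.2) (a, c) (1, 0) :=
  HasDerivAt.deriv ((hasFDerivAt_f hf hc).comp_hasDerivAt (f := fun a => (a, c)) a
    ((hasDerivAt_id a).prodMk (hasDerivAt_const a c)))

lemma deriv_f_snd {f : ℝ → ℝ → ℝ}
    (hf : ContDiffOn ℝ 2 (fun q : ℝ × ℝ => f q.1 q.2) (Set.univ ×ˢ Set.Ioi 0)) {a c : ℝ}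
    (hc : 0 < c) :
    deriv (f a) c = fderiv ℝ (fun q : ℝ × ℝ => f q.1 q.2) (a, c) (0, 1) :=
  HasDerivAt.deriv ((hasFDerivAt_f hf hc).comp_hasDerivAt (f := fun c => (a, c)) c
    ((hasDerivAt_const c a).prodMk (hasDerivAt_id c)))

section fields

variable {f : ℝ → ℝ → ℝ} {G : (Fin d → ℝ) → ℝ} {φ θ : ℝ → (Fin d → ℝ) → ℝ}

lemma contDiff_fderiv_f
    (hf : ContDiffOn ℝ 2 (fun q : ℝ × ℝ => f q.1 q.2) (Set.univ ×ˢ Set.Ioi 0))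
    (hφ : ContDiff ℝ (⊤ : ℕ∞) fun q : ℝ × (Fin d → ℝ) => φ q.1 q.2)
    (hθ : ContDiff ℝ (⊤ : ℕ∞) fun q : ℝ × (Fin d → ℝ) => θ q.1 q.2)
    (hθpos : ∀ t x, 0 < θ t x) :
    ContDiff ℝ 1 fun q : ℝ × (Fin d → ℝ) =>
      fderiv ℝ (fun q : ℝ × ℝ => f q.1 q.2) (φ q.1 q.2, θ q.1 q.2) := by
  have h := hf.fderiv_of_isOpen (m := 1) (isOpen_univ.prod isOpen_Ioi) (by norm_num)
  exact h.comp_contDiff ((hφ.prodMk hθ).of_le (by exact_mod_cast le_top))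
    fun q => ⟨trivial, hθpos _ _⟩

lemma contDiff_f_theta
    (hf : ContDiffOn ℝ 2 (fun q : ℝ × ℝ => f q.1 q.2) (Set.univ ×ˢ Set.Ioi 0))
    (hφ : ContDiff ℝ (⊤ : ℕ∞) fun q : ℝ × (Fin d → ℝ) => φ q.1 q.2)
    (hθ : ContDiff ℝ (⊤ : ℕ∞) fun q : ℝ × (Fin d → ℝ) => θ q.1 q.2)
    (hθpos : ∀ t x, 0 < θ t x) :
    ContDiff ℝ 1 fun q : ℝ × (Fin d → ℝ) => deriv (f (φ q.1 q.2)) (θ q.1 q.2) := by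
  simp only [deriv_f_snd hf (hθpos _ _)]
  exact (contDiff_fderiv_f hf hφ hθ hθpos).clm_apply contDiff_const

lemma contDiff_f_phi
    (hf : ContDiffOn ℝ 2 (fun q : ℝ × ℝ => f q.1 q.2) (Set.univ ×ˢ Set.Ioi 0))
    (hφ : ContDiff ℝ (⊤ : ℕ∞) fun q : ℝ × (Fin d → ℝ) => φ q.1 q.2)
    (hθ : ContDiff ℝ (⊤ : ℕ∞) fun q : ℝ × (Fin d → ℝ) => θ q.1 q.2)
    (hθpos : ∀ t x, 0 < θ t x) :
    ContDiff ℝ 1 fun q : ℝ × (Fin d → ℝ) => deriv (fun a => f a (θ q.1 q.2)) (φ q.1 q.2) := by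
  simp only [deriv_f_fst hf (hθpos _ _)]
  exact (contDiff_fderiv_f hf hφ hθ hθpos).clm_apply contDiff_const

lemma contDiff_grad_s12 (hφ : ContDiff ℝ (⊤ : ℕ∞) fun q : ℝ × (Fin d → ℝ) => φ q.1 q.2) :
    ContDiff ℝ 1 fun q : ℝ × (Fin d → ℝ) => grad (φ q.1) q.2 :=
  contDiff_pi.2 fun i => contDiff_pd_s12 hφ one_add_one_le_smooth i

lemma contDiff_entS (hG : ContDiff ℝ 2 G)
    (hf : ContDiffOn ℝ 2 (fun q : ℝ × ℝ => f q.1 q.2) (Set.univ ×ˢ Set.Ioi 0))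
    (hφ : ContDiff ℝ (⊤ : ℕ∞) fun q : ℝ × (Fin d → ℝ) => φ q.1 q.2)
    (hθ : ContDiff ℝ (⊤ : ℕ∞) fun q : ℝ × (Fin d → ℝ) => θ q.1 q.2)
    (hθpos : ∀ t x, 0 < θ t x) :
    ContDiff ℝ 1 fun q : ℝ × (Fin d → ℝ) => entS G f φ θ q.1 q.2 :=
  (((hG.of_le (by norm_num)).comp (contDiff_grad_s12 hφ)).neg).sub
    (contDiff_f_theta hf hφ hθ hθpos)

lemma continuous_gradG (hG : ContDiff ℝ 2 G)
    (hφ : ContDiff ℝ (⊤ : ℕ∞) fun q : ℝ × (Fin d → ℝ) => φ q.1 q.2) (t : ℝ) (i : Fin d) :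
    Continuous fun x => grad G (grad (φ t) x) i :=
  ((hG.continuous_fderiv (by simp)).clm_apply continuous_const).comp
    (contDiff_slice (g := fun t x => grad (φ t) x) (contDiff_grad_s12 hφ) t).continuous

lemma contDiff_intE
    (hf : ContDiffOn ℝ 2 (fun q : ℝ × ℝ => f q.1 q.2) (Set.univ ×ˢ Set.Ioi 0))
    (hφ : ContDiff ℝ (⊤ : ℕ∞) fun q : ℝ × (Fin d → ℝ) => φ q.1 q.2)
    (hθ : ContDiff ℝ (⊤ : ℕ∞) fun q : ℝ × (Fin d → ℝ) => θ q.1 q.2)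
    (hθpos : ∀ t x, 0 < θ t x) :
    ContDiff ℝ 1 fun q : ℝ × (Fin d → ℝ) => intE f φ θ q.1 q.2 := by
  have h1 : ContDiff ℝ 1 fun q : ℝ × (Fin d → ℝ) => f (φ q.1 q.2) (θ q.1 q.2) :=
    (hf.of_le (by norm_num)).comp_contDiff ((hφ.prodMk hθ).of_le (by exact_mod_cast le_top))
      fun q => ⟨trivial, hθpos _ _⟩
  exact h1.sub ((hθ.of_le (by exact_mod_cast le_top)).mul (contDiff_f_theta hf hφ hθ hθpos))

/-- The Gibbs relation in time: the chain rule gives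
`∂ₜe = ∂_φf ∂ₜφ - θ ∂ₜ(∂_θf)`, since the terms `∂_θf ∂ₜθ` cancel, and
`∂ₜ(∂_θf) = -∂ₜs - ∇G(∇φ)·∇∂ₜφ` by the definition of `s`. -/
lemma dt_intE (hG : ContDiff ℝ 2 G)
    (hf : ContDiffOn ℝ 2 (fun q : ℝ × ℝ => f q.1 q.2) (Set.univ ×ˢ Set.Ioi 0))
    (hφ : ContDiff ℝ (⊤ : ℕ∞) fun q : ℝ × (Fin d → ℝ) => φ q.1 q.2)
    (hθ : ContDiff ℝ (⊤ : ℕ∞) fun q : ℝ × (Fin d → ℝ) => θ q.1 q.2)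
    (hθpos : ∀ t x, 0 < θ t x) (t : ℝ) (x : Fin d → ℝ) :
    dt (intE f φ θ) t x = deriv (fun a => f a (θ t x)) (φ t x) * dt φ t x
      + dt (entS G f φ θ) t x * θ t x
      + θ t x * ∑ i, grad G (grad (φ t) x) i * pd i (dt φ t) x := by
  have dφ := hasDerivAt_dt (hφ.differentiable (by simp)) t x
  have dθ := hasDerivAt_dt (hθ.differentiable (by simp)) t x
  have dfθ := hasDerivAt_dt (g := fun t x => deriv (f (φ t x)) (θ t x))
    ((contDiff_f_theta hf hφ hθ hθpos).differentiable (by simp)) t x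
  set A := dt (fun t x => deriv (f (φ t x)) (θ t x)) t x
  have dgrad : HasDerivAt (fun s => grad (φ s) x) (fun i => pd i (dt φ t) x) t := by
    refine hasDerivAt_pi.2 fun i => ?_
    rw [← dt_pd_comm hφ]
    exact hasDerivAt_dt (g := fun s y => pd i (φ s) y)
      ((contDiff_pd_s12 (m := 1) hφ one_add_one_le_smooth i).differentiable (by simp)) t x
  have dG : HasDerivAt (fun s => G (grad (φ s) x))
      (∑ i, grad G (grad (φ t) x) i * pd i (dt φ t) x) t := by
    have h := ((hG.differentiable (by simp)) (grad (φ t) x)).hasFDerivAt.comp_hasDerivAt t dgrad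
    refine h.congr_deriv ?_
    conv_lhs => rw [pi_eq_sum_univ' (fun i => pd i (dt φ t) x), map_sum]
    refine Finset.sum_congr rfl fun i _ => ?_
    rw [map_smul, smul_eq_mul, mul_comm, grad, pd]
    congr 2
  have ds : dt (entS G f φ θ) t x = -(∑ i, grad G (grad (φ t) x) i * pd i (dt φ t) x) - A :=
    (dG.neg.sub dfθ).deriv
  have df : HasDerivAt (fun s => f (φ s x) (θ s x))
      (deriv (fun a => f a (θ t x)) (φ t x) * dt φ t x
        + deriv (f (φ t x)) (θ t x) * dt θ t x) t := by
    have h := (hasFDerivAt_f hf (a := φ t x) (hθpos t x)).comp_hasDerivAt t (dφ.prodMk dθ)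
    refine h.congr_deriv ?_
    rw [deriv_f_fst hf (hθpos t x), deriv_f_snd hf (hθpos t x)]
    have : (dt φ t x, dt θ t x) = dt φ t x • ((1 : ℝ), (0 : ℝ)) + dt θ t x • ((0 : ℝ), (1 : ℝ)) := by
      simp
    rw [this, map_add, map_smul, map_smul, smul_eq_mul, smul_eq_mul]
    ring
  have de : dt (intE f φ θ) t x = _ := (df.sub (dθ.mul dfθ)).deriv
  rw [de, ds]
  ring

end fields

end helpers

/-! ### The energy balance -/

/-- total energy balance for solutions of the variational formulation (V1)-(V5). -/
theorem variational_total_energy_balance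
    {d : ℕ} (hd : d = 1 ∨ d = 2 ∨ d = 3)
    (T : ℝ) (hT : 0 < T) (L : Fin d → ℝ) (hL : ∀ i, 0 < L i)
    (G : (Fin d → ℝ) → ℝ) (hG : ContDiff ℝ 2 G)
    (f : ℝ → ℝ → ℝ)
    (hf : ContDiffOn ℝ 2 (fun q : ℝ × ℝ => f q.1 q.2) (Set.univ ×ˢ Set.Ioi 0))
    (M K η : ℝ → ℝ → ℝ)
    (hM : ContDiff ℝ (⊤ : ℕ∞) fun q : ℝ × ℝ => M q.1 q.2) (hMpos : ∀ a b, 0 < M a b)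
    (hK : ContDiff ℝ (⊤ : ℕ∞) fun q : ℝ × ℝ => K q.1 q.2) (hKpos : ∀ a b, 0 < K a b)
    (hη : ContDiff ℝ (⊤ : ℕ∞) fun q : ℝ × ℝ => η q.1 q.2) (hηpos : ∀ a b, 0 < η a b)
    (φ μ θ p : ℝ → (Fin d → ℝ) → ℝ)
    (u : ℝ → (Fin d → ℝ) → Fin d → ℝ)
    (Q : ℝ → (Fin d → ℝ) → ℝ) (b : ℝ → (Fin d → ℝ) → Fin d → ℝ)
    (hφ : ContDiff ℝ (⊤ : ℕ∞) fun q : ℝ × (Fin d → ℝ) => φ q.1 q.2)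
    (hμsm : ContDiff ℝ (⊤ : ℕ∞) fun q : ℝ × (Fin d → ℝ) => μ q.1 q.2)
    (hθsm : ContDiff ℝ (⊤ : ℕ∞) fun q : ℝ × (Fin d → ℝ) => θ q.1 q.2)
    (hpsm : ContDiff ℝ (⊤ : ℕ∞) fun q : ℝ × (Fin d → ℝ) => p q.1 q.2)
    (husm : ContDiff ℝ (⊤ : ℕ∞) fun q : ℝ × (Fin d → ℝ) => u q.1 q.2)
    (hQsm : ContDiff ℝ (⊤ : ℕ∞) fun q : ℝ × (Fin d → ℝ) => Q q.1 q.2)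
    (hbsm : ContDiff ℝ (⊤ : ℕ∞) fun q : ℝ × (Fin d → ℝ) => b q.1 q.2)
    (hθpos : ∀ t x, 0 < θ t x)
    (hφper : ∀ t, SpacePeriodic L (φ t))
    (hμper : ∀ t, SpacePeriodic L (μ t))
    (hθper : ∀ t, SpacePeriodic L (θ t))
    (hpper : ∀ t, SpacePeriodic L (p t))
    (huper : ∀ t j, SpacePeriodic L fun x => u t x j)
    (hQper : ∀ t, SpacePeriodic L (Q t))
    (hbper : ∀ t j, SpacePeriodic L fun x => b t x j)
    -- (V1)
    (hV1 : ∀ t ∈ Set.Ioo (0 : ℝ) T,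
      ∀ ψ : (Fin d → ℝ) → ℝ, ContDiff ℝ (⊤ : ℕ∞) ψ → SpacePeriodic L ψ →
        (∫ x in box L, dt φ t x * ψ x)
            + (∫ x in box L, dot (u t x) (grad (φ t) x) * ψ x)
          = -∫ x in box L, M (φ t x) (θ t x) / θ t x * μ t x * ψ x)
    -- (V2)
    (hV2 : ∀ t ∈ Set.Ioo (0 : ℝ) T,
      ∀ ξ : (Fin d → ℝ) → ℝ, ContDiff ℝ (⊤ : ℕ∞) ξ → SpacePeriodic L ξ →
        (∫ x in box L, μ t x * ξ x)
          = (∫ x in box L, ∑ i, grad G (grad (φ t) x) i *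
              (θ t x * pd i ξ x + ξ x * pd i (θ t) x))
            + ∫ x in box L, deriv (fun a => f a (θ t x)) (φ t x) * ξ x)
    -- (V3)
    (hV3 : ∀ t ∈ Set.Ioo (0 : ℝ) T,
      ∀ ω : (Fin d → ℝ) → ℝ, ContDiff ℝ (⊤ : ℕ∞) ω → SpacePeriodic L ω →
        (∫ x in box L, dt (entS G f φ θ) t x * ω x)
            - (∫ x in box L, entS G f φ θ t x * dot (u t x) (grad ω x))
          = (∫ x in box L,
              M (φ t x) (θ t x) / (θ t x) ^ 2 * (μ t x) ^ 2 * ω x)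
            + (∫ x in box L, K (φ t x) (θ t x) / (θ t x) ^ 2 *
                ∑ i, pd i (θ t) x *
                  (ω x / (θ t x) ^ 2 * pd i (θ t) x - (θ t x)⁻¹ * pd i ω x))
            + (∫ x in box L, η (φ t x) (θ t x) / θ t x *
                (∑ i, ∑ j, (symGrad (u t) x i j) ^ 2) * ω x)
            + (∫ x in box L, ∑ i,
                (grad G (grad (φ t) x) i * dt φ t x
                  + grad G (grad (φ t) x) i * dot (grad (φ t) x) (u t x)) * pd i ω x)
            + ∫ x in box L, Q t x * ω x / θ t x)
    -- (V4)
    (hV4 : ∀ t ∈ Set.Ioo (0 : ℝ) T,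
      ∀ v : (Fin d → ℝ) → Fin d → ℝ, ContDiff ℝ (⊤ : ℕ∞) v →
        (∀ j, SpacePeriodic L fun x => v x j) →
        (∫ x in box L, ∑ j, dt (fun s y => u s y j) t x * v x j)
            + ((1 / 2) * (∫ x in box L,
                  ∑ j, (∑ i, u t x i * pd i (fun y => u t y j) x) * v x j)
                - (1 / 2) * ∫ x in box L,
                  ∑ j, (∑ i, u t x i * pd i (fun y => v y j) x) * u t x j)
          = -(∫ x in box L, η (φ t x) (θ t x) *
                ∑ i, ∑ j, symGrad (u t) x i j * symGrad v x i j)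
            + (∫ x in box L, p t x * divg v x)
            + (∫ x in box L, dot (b t x) (v x))
            - ∫ x in box L, ∑ j,
                (dot (grad G (grad (φ t) x)) (grad (θ t) x) * pd j (φ t) x
                  + entS G f φ θ t x * pd j (θ t) x
                  - μ t x * pd j (φ t) x) * v x j)
    -- (V5)
    (hV5 : ∀ t ∈ Set.Ioo (0 : ℝ) T,
      ∀ q : (Fin d → ℝ) → ℝ, ContDiff ℝ (⊤ : ℕ∞) q → SpacePeriodic L q →
        (∫ x in box L, q x) = 0 →
        (∫ x in box L, divg (u t) x * q x) = 0)
    :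
    ∀ t ∈ Set.Ioo (0 : ℝ) T,
      deriv (fun s => ∫ x in box L, totE f φ θ u s x) t
        = (∫ x in box L, Q t x) + ∫ x in box L, dot (b t x) (u t x) := by
  intro t ht
  have ujsm : ∀ j, ContDiff ℝ (⊤ : ℕ∞) fun q : ℝ × (Fin d → ℝ) => u q.1 q.2 j :=
    fun j => contDiff_pi.1 husm j
  have h1le : (1 : WithTop ℕ∞) ≤ ((⊤ : ℕ∞) : WithTop ℕ∞) := le_of_add_le_left one_add_one_le_smooth
  have hθ0 : ∀ x, θ t x ≠ 0 := fun x => (hθpos t x).ne'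
  have cφt : Continuous fun x => dt φ t x := continuous_dt_slice (hφ.of_le h1le) t
  have sφt : ContDiff ℝ (⊤ : ℕ∞) fun q : ℝ × (Fin d → ℝ) => dt φ q.1 q.2 :=
    contDiff_dt hφ (by simp)
  have cμ : Continuous fun x => μ t x := continuous_slice hμsm t
  have cθ : Continuous fun x => θ t x := continuous_slice hθsm t
  have cu : ∀ j, Continuous fun x => u t x j := fun j =>
    continuous_slice (g := fun t x => u t x j) (ujsm j) t
  have cut : ∀ j, Continuous fun x => dt (fun s y => u s y j) t x := fun j =>
    continuous_dt_slice ((ujsm j).of_le h1le) t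
  have cdφ : ∀ i, Continuous fun x => pd i (φ t) x := continuous_pd_slice hφ t
  have cdθ : ∀ i, Continuous fun x => pd i (θ t) x := continuous_pd_slice hθsm t
  have cdφt : ∀ i, Continuous fun x => pd i (dt φ t) x := continuous_pd_slice sφt t
  have cG : ∀ i, Continuous fun x => grad G (grad (φ t) x) i := continuous_gradG hG hφ t
  have sS := contDiff_entS hG hf hφ hθsm hθpos
  have cS : Continuous fun x => entS G f φ θ t x := continuous_slice sS t
  have cSt : Continuous fun x => dt (entS G f φ θ) t x := continuous_dt_slice sS t
  have cfφ : Continuous fun x => deriv (fun a => f a (θ t x)) (φ t x) :=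
    continuous_slice (g := fun t x => deriv (fun a => f a (θ t x)) (φ t x))
      (contDiff_f_phi hf hφ hθsm hθpos) t
  -- The terms below occur in several of the tested equations, or in `∂ₜe_tot`, which equals
  -- `a6 + a7 + a4 + a11`; the combination of the equations cancels all the others.
  set a2 : (Fin d → ℝ) → ℝ := fun x => dot (u t x) (grad (φ t) x) * μ t x with ha2
  set a4 : (Fin d → ℝ) → ℝ := fun x =>
    θ t x * ∑ i, grad G (grad (φ t) x) i * pd i (dt φ t) x with ha4
  set a5 : (Fin d → ℝ) → ℝ := fun x =>
    dot (grad G (grad (φ t) x)) (grad (θ t) x) * dt φ t x with ha5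
  set a6 : (Fin d → ℝ) → ℝ := fun x =>
    deriv (fun a => f a (θ t x)) (φ t x) * dt φ t x with ha6
  set a7 : (Fin d → ℝ) → ℝ := fun x => dt (entS G f φ θ) t x * θ t x with ha7
  set a8 : (Fin d → ℝ) → ℝ := fun x => entS G f φ θ t x * dot (u t x) (grad (θ t) x) with ha8
  set a10 : (Fin d → ℝ) → ℝ := fun x =>
    dot (grad G (grad (φ t) x)) (grad (θ t) x) * dot (u t x) (grad (φ t) x) with ha10
  set a11 : (Fin d → ℝ) → ℝ := fun x =>
    ∑ j, dt (fun s y => u s y j) t x * u t x j with ha11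
  have i2 : Integrable a2 (volume.restrict (box L)) :=
    integrableOn_box (by simp only [ha2, dot, grad]; fun_prop)
  have i4 : Integrable a4 (volume.restrict (box L)) :=
    integrableOn_box (by simp only [ha4]; fun_prop)
  have i5 : Integrable a5 (volume.restrict (box L)) :=
    integrableOn_box (by
      have : Continuous fun x => ∑ i, grad G (grad (φ t) x) i * pd i (θ t) x := by fun_prop
      exact this.mul cφt)
  have i6 : Integrable a6 (volume.restrict (box L)) := integrableOn_box (cfφ.mul cφt)
  have i7 : Integrable a7 (volume.restrict (box L)) := integrableOn_box (cSt.mul cθ)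
  have i8 : Integrable a8 (volume.restrict (box L)) :=
    integrableOn_box (by simp only [ha8, dot, grad]; fun_prop)
  have i10 : Integrable a10 (volume.restrict (box L)) :=
    integrableOn_box (by
      have h1 : Continuous fun x => ∑ i, grad G (grad (φ t) x) i * pd i (θ t) x := by fun_prop
      have h2 : Continuous fun x => ∑ i, u t x i * pd i (φ t) x := by fun_prop
      exact h1.mul h2)
  have i11 : Integrable a11 (volume.restrict (box L)) :=
    integrableOn_box (by simp only [ha11]; fun_prop)
  have ediv : ∫ x in box L, divg (u t) x = 0 :=
    integral_divg_eq_zero hL (contDiff_slice (husm.of_le h1le) t) (huper t)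
  -- The pressure does no work: test incompressibility with `p` minus its mean over the box.
  have ep : ∫ x in box L, p t x * divg (u t) x = 0 := by
    have cp : Continuous fun x => p t x := continuous_slice hpsm t
    have cdiv : Continuous fun x => divg (u t) x :=
      continuous_finsetSum _ fun j _ =>
        continuous_pd_slice (g := fun t x => u t x j) (ujsm j) t j
    have hvol : volume.real (box L) ≠ 0 := by
      have hle : (0 : Fin d → ℝ) ≤ L := fun i => (hL i).le
      rw [box_eq_Icc, Measure.real, Real.volume_Icc_pi_toReal hle]
      exact (Finset.prod_pos fun i _ => by simpa using hL i).ne'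
    set m : ℝ := (∫ x in box L, p t x) / volume.real (box L) with hm
    have hfin : IsFiniteMeasure (volume.restrict (box L)) := by
      rw [isFiniteMeasure_restrict, box_eq_Icc]
      exact isCompact_Icc.measure_lt_top.ne
    have h0 : ∫ x in box L, (p t x - m) = 0 := by
      rw [integral_sub (integrableOn_box cp) (integrable_const m), setIntegral_const,
        smul_eq_mul, hm, mul_div_cancel₀ _ hvol, sub_self]
    have h5 := hV5 t ht (fun x => p t x - m)
      ((contDiff_slice hpsm t).sub contDiff_const)
      (fun x i => by simp only [hpper t x i]) h0
    have e : ∀ x, divg (u t) x * (p t x - m) = p t x * divg (u t) x - m * divg (u t) x :=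
      fun x => by ring
    simp only [e] at h5
    rwa [integral_sub (integrableOn_box (cp.fun_mul cdiv))
      (integrableOn_box (continuous_const.fun_mul cdiv)), integral_const_mul, ediv, mul_zero,
      sub_zero] at h5
  have h1 := hV1 t ht (μ t) (contDiff_slice hμsm t) (hμper t)
  have h2 := hV2 t ht (dt φ t) (contDiff_slice sφt t) (dt_periodic hφper t)
  have h3 := hV3 t ht (θ t) (contDiff_slice hθsm t) (hθper t)
  have h4 := hV4 t ht (u t) (contDiff_slice husm t) (huper t)
  have e1 : ∫ x in box L, μ t x * dt φ t x = ∫ x in box L, dt φ t x * μ t x := by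
    simp only [mul_comm]
  have e2 : (∫ x in box L, ∑ i, grad G (grad (φ t) x) i *
      (θ t x * pd i (dt φ t) x + dt φ t x * pd i (θ t) x))
      = (∫ x in box L, a4 x) + ∫ x in box L, a5 x := by
    rw [← integral_add i4 i5]
    congr 1; ext x
    simp only [ha4, ha5, dot, grad, Finset.mul_sum, Finset.sum_mul, ← Finset.sum_add_distrib]
    exact Finset.sum_congr rfl fun i _ => by ring
  have e3 : (∫ x in box L, M (φ t x) (θ t x) / (θ t x) ^ 2 * (μ t x) ^ 2 * θ t x)
      = ∫ x in box L, M (φ t x) (θ t x) / θ t x * μ t x * μ t x := by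
    congr 1; ext x
    have := hθ0 x
    field_simp
  -- The heat flux vanishes identically against `ω = θ`.
  have eK : (∫ x in box L, K (φ t x) (θ t x) / (θ t x) ^ 2 *
      ∑ i, pd i (θ t) x *
        (θ t x / (θ t x) ^ 2 * pd i (θ t) x - (θ t x)⁻¹ * pd i (θ t) x)) = 0 := by
    have : ∀ x, θ t x / (θ t x) ^ 2 = (θ t x)⁻¹ := fun x => by
      have := hθ0 x
      field_simp
    simp [this]
  have eη : (∫ x in box L, η (φ t x) (θ t x) / θ t x *
      (∑ i, ∑ j, (symGrad (u t) x i j) ^ 2) * θ t x)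
      = ∫ x in box L, η (φ t x) (θ t x) *
          ∑ i, ∑ j, symGrad (u t) x i j * symGrad (u t) x i j := by
    congr 1; ext x
    have := hθ0 x
    simp only [← sq]
    field_simp
  have e5 : (∫ x in box L, ∑ i, (grad G (grad (φ t) x) i * dt φ t x
        + grad G (grad (φ t) x) i * dot (grad (φ t) x) (u t x)) * pd i (θ t) x)
      = (∫ x in box L, a5 x) + ∫ x in box L, a10 x := by
    rw [← integral_add i5 i10]
    congr 1; ext x
    have hdot : dot (grad (φ t) x) (u t x) = dot (u t x) (grad (φ t) x) := by
      simp only [dot, mul_comm]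
    simp only [ha5, ha10, hdot]
    generalize dot (u t x) (grad (φ t) x) = c
    simp only [dot, grad, Finset.sum_mul, ← Finset.sum_add_distrib]
    exact Finset.sum_congr rfl fun i _ => by ring
  have eQ : (∫ x in box L, Q t x * θ t x / θ t x) = ∫ x in box L, Q t x := by
    congr 1; ext x
    exact mul_div_cancel_right₀ _ (hθ0 x)
  have e6 : (∫ x in box L, ∑ j, (dot (grad G (grad (φ t) x)) (grad (θ t) x) * pd j (φ t) x
        + entS G f φ θ t x * pd j (θ t) x - μ t x * pd j (φ t) x) * u t x j)
      = (∫ x in box L, a10 x) + (∫ x in box L, a8 x) - ∫ x in box L, a2 x := by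
    rw [← integral_add i10 i8, ← integral_sub (i10.fun_add i8) i2]
    congr 1; ext x
    simp only [ha10, ha8, ha2]
    generalize dot (grad G (grad (φ t) x)) (grad (θ t) x) = c
    simp only [dot, grad, Finset.mul_sum, Finset.sum_mul, ← Finset.sum_add_distrib,
      ← Finset.sum_sub_distrib]
    exact Finset.sum_congr rfl fun i _ => by ring
  have hkin : ContDiff ℝ 1 fun q : ℝ × (Fin d → ℝ) => (1 / 2) * ∑ i, (u q.1 q.2 i) ^ 2 :=
    contDiff_const.mul (ContDiff.sum fun i _ => ((ujsm i).of_le h1le).pow 2)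
  have hE := contDiff_intE hf hφ hθsm hθpos
  have etot : ∀ x, dt (totE f φ θ u) t x = a6 x + a7 x + a4 x + a11 x := fun x => by
    have dk : HasDerivAt (fun s => (1 / 2) * ∑ i, (u s x i) ^ 2) (a11 x) t := by
      have h := (HasDerivAt.fun_sum (u := Finset.univ) fun i _ =>
        (hasDerivAt_dt (g := fun s y => u s y i)
          ((ujsm i).differentiable (by simp)) t x).fun_pow 2).const_mul (1 / 2 : ℝ)
      refine h.congr_deriv ?_
      simp only [ha11, Finset.mul_sum]
      exact Finset.sum_congr rfl fun i _ => by push_cast; ring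
    have h : dt (totE f φ θ u) t x = dt (intE f φ θ) t x + a11 x :=
      ((hasDerivAt_dt (hE.differentiable (by simp)) t x).add dk).deriv
    rw [h, dt_intE hG hf hφ hθsm hθpos]
  rw [deriv_integral_box (g := totE f φ θ u) (hE.add hkin)]
  simp only [etot]
  rw [integral_add ((i6.fun_add i7).fun_add i4) i11, integral_add (i6.fun_add i7) i4,
    integral_add i6 i7]
  rw [e1, e2] at h2
  rw [e3, eK, eη, e5, eQ] at h3
  rw [e6, ep] at h4
  linarith
end
end
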